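/- Let k ≥ 2m be an even integer and define φ̃(ρ) := (1/(2π)) ∫_ℝ e^{-iρr} e^{-r^{k}} dr. Then for every R > 0, ∫_{-R}^{R} φ̃(ρ) ( ∫_{ℝ^N} e^{-xᵀKx} e^{iρ · P̃(x)^{1/k}} dx ) dρ = ∑_{n=0}^∞ (1/n!) ( ∫_{-R}^{R} φ̃(ρ) (iρ)^n dρ ) ( ∫_{ℝ^N} P̃(x)^{n/k} e^{-xᵀKx} dx ), where the series on the right converges absolutely; i.e. interchanging the expansion of e^{iρ·P̃(x)^{1/k}} with the integrations is justified. -/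

import Mathlib

open MeasureTheory Matrix

/-- The Fourier transform `φ̃(ρ) := (1/(2π)) ∫_ℝ e^{-iρr} e^{-r^k} dr`. -/
noncomputable def phiFT (k : ℕ) (ρ : ℝ) : ℂ :=
  (1 / (2 * Real.pi)) *
    ∫ r : ℝ, Complex.exp (-(Complex.I * (ρ : ℂ) * (r : ℂ))) * (Real.exp (-(r ^ k)) : ℂ)


lemma aux_quad {N : ℕ} (K : Matrix (Fin N) (Fin N) ℝ) (hK : K.PosDef) :
    ∃ c : ℝ, 0 < c ∧ ∀ x : Fin N → ℝ, c * ‖x‖ ^ 2 ≤ x ⬝ᵥ K *ᵥ x := by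
  have hcont : Continuous (fun x : Fin N → ℝ => x ⬝ᵥ K *ᵥ x) := by fun_prop
  rcases (Metric.sphere (0 : Fin N → ℝ) 1).eq_empty_or_nonempty with he | hne
  · refine ⟨1, one_pos, fun x => ?_⟩
    by_cases hx : x = 0
    · simp [hx]
    · exfalso
      have : (‖x‖⁻¹ • x) ∈ Metric.sphere (0 : Fin N → ℝ) 1 := by
        have := norm_ne_zero_iff.mpr hx
        simp [norm_smul, this]
      rw [he] at this
      exact this
  · obtain ⟨x0, hx0, hmin⟩ := (isCompact_sphere (0 : Fin N → ℝ) 1).exists_isMinOn hne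
      hcont.continuousOn
    have hx0n : ‖x0‖ = 1 := by simpa using hx0
    have hx00 : x0 ≠ 0 := by
      rintro rfl
      simp at hx0n
    refine ⟨x0 ⬝ᵥ K *ᵥ x0, ?_, fun x => ?_⟩
    · simpa using hK.dotProduct_mulVec_pos hx00
    · by_cases hx : x = 0
      · simp [hx]
      · have hn := norm_ne_zero_iff.mpr hx
        have hmem : (‖x‖⁻¹ • x) ∈ Metric.sphere (0 : Fin N → ℝ) 1 := by
          simp [norm_smul, hn]
        have h := hmin hmem
        simp only [Set.mem_ofPred_eq, Matrix.mulVec_smul, smul_dotProduct, dotProduct_smul,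
          smul_eq_mul] at h
        calc _ ≤ (‖x‖⁻¹ * (‖x‖⁻¹ * x ⬝ᵥ K *ᵥ x)) * ‖x‖ ^ 2 := by gcongr
          _ = _ := by field_simp

lemma aux_poly {N : ℕ} (p : MvPolynomial (Fin N) ℝ) :
    ∃ C : ℝ, 0 ≤ C ∧ ∀ x : Fin N → ℝ,
      MvPolynomial.eval x p ≤ C * (1 + ‖x‖) ^ p.totalDegree := by
  refine ⟨∑ d ∈ p.support, |p.coeff d|, Finset.sum_nonneg fun _ _ => abs_nonneg _, fun x => ?_⟩
  rw [MvPolynomial.eval_eq', Finset.sum_mul]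
  refine Finset.sum_le_sum fun d hd => ?_
  refine (le_abs_self _).trans ?_
  rw [abs_mul]
  gcongr
  rw [Finset.abs_prod]
  have h1 : (1 : ℝ) ≤ 1 + ‖x‖ := by linarith [norm_nonneg x]
  calc ∏ i, |x i ^ d i| ≤ ∏ i, (1 + ‖x‖) ^ d i := by
        refine Finset.prod_le_prod (fun _ _ => abs_nonneg _) fun i _ => ?_
        rw [abs_pow]
        gcongr
        have := norm_le_pi_norm x i
        rw [Real.norm_eq_abs] at this
        linarith
    _ = (1 + ‖x‖) ^ (∑ i, d i) := by rw [Finset.prod_pow_eq_pow_sum]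
    _ ≤ _ := by
        apply pow_le_pow_right₀ h1
        have := MvPolynomial.le_totalDegree hd
        rwa [Finsupp.sum_fintype _ _ (by simp)] at this

lemma aux_gauss (N : ℕ) (c : ℝ) (hc : 0 < c) :
    Integrable (fun x : Fin N → ℝ => Real.exp (-c * ‖x‖ ^ 2)) := by
  have hb : 0 < c / (N + 1) := by positivity
  have h : Integrable (fun x : Fin N → ℝ => ∏ i, Real.exp (-(c / (N + 1)) * x i ^ 2)) :=
    Integrable.fintype_prod (f := fun _ t => Real.exp (-(c / (N + 1)) * t ^ 2))
      fun _ => integrable_exp_neg_mul_sq hb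
  refine h.mono' (by fun_prop) (Filter.Eventually.of_forall fun x => ?_)
  rw [Real.norm_eq_abs, Real.abs_exp, ← Real.exp_sum, Real.exp_le_exp, ← Finset.mul_sum]
  have : ∑ i, x i ^ 2 ≤ (N + 1) * ‖x‖ ^ 2 := by
    calc ∑ i, x i ^ 2 ≤ ∑ i : Fin N, ‖x‖ ^ 2 := by
          refine Finset.sum_le_sum fun i _ => ?_
          rw [← sq_abs]
          have := norm_le_pi_norm x i
          rw [Real.norm_eq_abs] at this
          gcongr
      _ = N * ‖x‖ ^ 2 := by simp
      _ ≤ _ := by nlinarith [sq_nonneg ‖x‖]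
  have h2 : c / (N + 1) * ∑ i, x i ^ 2 ≤ c / (N + 1) * ((N + 1) * ‖x‖ ^ 2) := by gcongr
  have h3 : c / (N + 1) * ((N + 1) * ‖x‖ ^ 2) = c * ‖x‖ ^ 2 := by field_simp
  linarith

lemma aux_main {N : ℕ} (g q : (Fin N → ℝ) → ℝ) (hg : Continuous g) (hq : Continuous q)
    (hg0 : ∀ x, 0 ≤ g x) (D c : ℝ) (hc : 0 < c)
    (hgD : ∀ x, g x ≤ D * (1 + ‖x‖)) (hqc : ∀ x, c * ‖x‖ ^ 2 ≤ q x) (R : ℝ) (hR : 0 < R) :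
    Integrable (fun x => Real.exp (R * g x) * Real.exp (-q x)) := by
  refine ((aux_gauss N (c / 2) (by positivity)).const_mul
    (Real.exp (R * D + (R * D) ^ 2 / (2 * c)))).mono' (by fun_prop)
    (Filter.Eventually.of_forall fun x => ?_)
  rw [← Real.exp_add, ← Real.exp_add, Real.norm_eq_abs, Real.abs_exp, Real.exp_le_exp]
  have h1 : R * g x ≤ R * (D * (1 + ‖x‖)) := by gcongr; exact hgD x
  have h2 := hqc x
  have h3 : R * D * ‖x‖ ≤ c / 2 * ‖x‖ ^ 2 + (R * D) ^ 2 / (2 * c) := by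
    have : c / 2 * ‖x‖ ^ 2 + (R * D) ^ 2 / (2 * c) - R * D * ‖x‖
      = (c * ‖x‖ - R * D) ^ 2 / (2 * c) := by field_simp; ring
    have h4 : 0 ≤ (c * ‖x‖ - R * D) ^ 2 / (2 * c) := by positivity
    linarith
  nlinarith

lemma aux_phi_bound (k : ℕ) : ∃ C : ℝ, 0 ≤ C ∧ ∀ ρ, ‖phiFT k ρ‖ ≤ C := by
  refine ⟨‖(1 / (2 * Real.pi) : ℂ)‖ * ∫ r : ℝ, Real.exp (-(r ^ k)), ?_, fun ρ => ?_⟩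
  · exact mul_nonneg (norm_nonneg _) (integral_nonneg fun _ => (Real.exp_pos _).le)
  · unfold phiFT
    rw [norm_mul]
    gcongr
    refine (norm_integral_le_integral_norm _).trans (le_of_eq ?_)
    congr 1
    ext r
    rw [norm_mul, Complex.norm_exp, Complex.norm_real, Real.norm_eq_abs, Real.abs_exp]
    simp

lemma aux_phi_meas (k : ℕ) : StronglyMeasurable (phiFT k) := by
  unfold phiFT
  refine StronglyMeasurable.const_mul ?_ _
  have : Continuous (fun z : ℝ × ℝ => Complex.exp (-(Complex.I * (z.1 : ℂ) * (z.2 : ℂ))) *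
    (Real.exp (-(z.2 ^ k)) : ℂ)) := by fun_prop
  exact this.stronglyMeasurable.integral_prod_right

lemma aux_final {N : ℕ} (g q : (Fin N → ℝ) → ℝ) (hg : Continuous g) (hq : Continuous q)
    (hg0 : ∀ x, 0 ≤ g x) (R : ℝ) (hR : 0 < R)
    (hExpInt : Integrable (fun x => Real.exp (R * g x) * Real.exp (-q x)))
    (φ : ℝ → ℂ) (hφ : StronglyMeasurable φ) (C : ℝ) (hC0 : 0 ≤ C) (hC : ∀ ρ, ‖φ ρ‖ ≤ C) :
    (∫ ρ in (-R)..R, φ ρ *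
        ∫ x : Fin N → ℝ, Complex.exp (-((q x : ℝ) : ℂ)) *
          Complex.exp (Complex.I * (ρ : ℂ) * ((g x : ℝ) : ℂ))) =
      (∑' n : ℕ, (1 / (n.factorial : ℂ)) *
        (∫ ρ in (-R)..R, φ ρ * (Complex.I * (ρ : ℂ)) ^ n) *
        ((∫ x : Fin N → ℝ, g x ^ n * Real.exp (-(q x)) : ℝ) : ℂ)) ∧
      Summable (fun n : ℕ => ‖(1 / (n.factorial : ℂ)) *
        (∫ ρ in (-R)..R, φ ρ * (Complex.I * (ρ : ℂ)) ^ n) *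
        ((∫ x : Fin N → ℝ, g x ^ n * Real.exp (-(q x)) : ℝ) : ℂ)‖) := by
  set a : ℕ → ℝ := fun n => ∫ x : Fin N → ℝ, g x ^ n * Real.exp (-(q x)) with ha
  -- termwise bound
  have hterm : ∀ (s : Finset ℕ) x, ∑ n ∈ s, R ^ n / n.factorial * (g x ^ n * Real.exp (-(q x)))
      ≤ Real.exp (R * g x) * Real.exp (-q x) := by
    intro s x
    have h0 : 0 ≤ R * g x := mul_nonneg hR.le (hg0 x)
    have : ∑ n ∈ s, (R * g x) ^ n / n.factorial ≤ Real.exp (R * g x) := by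
      rw [Real.exp_eq_exp_ℝ, NormedSpace.exp_eq_tsum_div]
      exact (Real.summable_pow_div_factorial (R * g x)).sum_le_tsum s
        (fun n _ => by positivity)
    calc _ = (∑ n ∈ s, (R * g x) ^ n / n.factorial) * Real.exp (-q x) := by
          rw [Finset.sum_mul]
          refine Finset.sum_congr rfl fun n _ => ?_
          rw [mul_pow]; ring
      _ ≤ _ := by gcongr
  have hTermInt : ∀ n : ℕ, Integrable (fun x => R ^ n / n.factorial * (g x ^ n * Real.exp (-(q x)))) := by
    intro n
    refine hExpInt.mono' (by fun_prop) (Filter.Eventually.of_forall fun x => ?_)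
    have h1 := hterm {n} x
    rw [Finset.sum_singleton] at h1
    have := hg0 x
    rwa [Real.norm_of_nonneg (by positivity)]
  have hintn : ∀ n : ℕ, Integrable (fun x => g x ^ n * Real.exp (-(q x))) := by
    intro n
    have h := (hTermInt n).const_mul (n.factorial / R ^ n)
    refine h.congr (Filter.Eventually.of_forall fun x => ?_)
    have : (n.factorial : ℝ) ≠ 0 := by positivity
    simp only
    field_simp
  have ha0 : ∀ n, 0 ≤ a n := fun n => integral_nonneg fun x => by
    have := hg0 x
    simp only [Pi.zero_apply]
    positivity
  have hsum : Summable (fun n : ℕ => R ^ n / n.factorial * a n) := by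
    refine summable_of_sum_le (c := ∫ x, Real.exp (R * g x) * Real.exp (-q x))
      (fun n => mul_nonneg (by positivity) (ha0 n)) fun s => ?_
    simp only [ha, ← integral_const_mul]
    rw [← integral_finsetSum _ fun n _ => hTermInt n]
    exact integral_mono (integrable_finsetSum _ fun n _ => hTermInt n) hExpInt (hterm s)
  -- inner integral
  have hinner : ∀ ρ : ℝ, |ρ| ≤ R → HasSum (fun n : ℕ => (Complex.I * (ρ : ℂ)) ^ n / n.factorial * (a n : ℂ))
      (∫ x : Fin N → ℝ, Complex.exp (-((q x : ℝ) : ℂ)) *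
          Complex.exp (Complex.I * (ρ : ℂ) * ((g x : ℝ) : ℂ))) := by
    intro ρ hρ
    have hnorm : ∀ (n : ℕ) x, ‖(Complex.I * (ρ : ℂ)) ^ n / n.factorial *
        ((g x ^ n * Real.exp (-(q x)) : ℝ) : ℂ)‖ =
        |ρ| ^ n / n.factorial * (g x ^ n * Real.exp (-(q x))) := by
      intro n x
      have := hg0 x
      rw [norm_mul, Complex.norm_real, Real.norm_of_nonneg (by positivity)]
      simp
    have h := hasSum_integral_of_summable_integral_norm (μ := (volume : Measure (Fin N → ℝ)))
      (F := fun (n : ℕ) x => (Complex.I * (ρ : ℂ)) ^ n / n.factorial *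
        ((g x ^ n * Real.exp (-(q x)) : ℝ) : ℂ))
      (fun n => (hintn n).ofReal.const_mul _) ?_
    · have e1 : ∀ n : ℕ, ∫ x : Fin N → ℝ, (Complex.I * (ρ : ℂ)) ^ n / n.factorial *
          ((g x ^ n * Real.exp (-(q x)) : ℝ) : ℂ) =
          (Complex.I * (ρ : ℂ)) ^ n / n.factorial * (a n : ℂ) := by
        intro n
        rw [integral_const_mul, integral_complex_ofReal]
      have e2 : ∀ x : Fin N → ℝ, ∑' n : ℕ, (Complex.I * (ρ : ℂ)) ^ n / n.factorial *
          ((g x ^ n * Real.exp (-(q x)) : ℝ) : ℂ) = Complex.exp (-((q x : ℝ) : ℂ)) *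
          Complex.exp (Complex.I * (ρ : ℂ) * ((g x : ℝ) : ℂ)) := by
        intro x
        have e3 : Complex.exp (Complex.I * (ρ : ℂ) * ((g x : ℝ) : ℂ)) =
            ∑' n : ℕ, (Complex.I * (ρ : ℂ) * ((g x : ℝ) : ℂ)) ^ n / n.factorial := by
          rw [Complex.exp_eq_exp_ℂ, NormedSpace.exp_eq_tsum_div]
        rw [e3, ← tsum_mul_left]
        refine tsum_congr fun n => ?_
        push_cast
        rw [mul_pow _ ((g x : ℝ) : ℂ)]
        ring
      simp only [e1, e2] at h
      exact h
    · simp only [hnorm, integral_const_mul]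
      refine hsum.of_nonneg_of_le (fun n => mul_nonneg (by positivity) (ha0 n)) fun n => ?_
      have := ha0 n
      gcongr
  -- outer integral
  have hle : -R ≤ R := by linarith
  have hbd : ∀ (n : ℕ), ∀ ρ ∈ Set.uIoc (-R) R,
      ‖φ ρ * ((Complex.I * (ρ : ℂ)) ^ n / n.factorial * (a n : ℂ))‖ ≤
        C * (R ^ n / n.factorial * a n) := by
    intro n ρ hρ
    rw [Set.uIoc_of_le hle] at hρ
    have h1 : |ρ| ≤ R := abs_le.mpr ⟨hρ.1.le, hρ.2⟩
    have := ha0 n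
    rw [norm_mul, norm_mul, Complex.norm_real, Real.norm_of_nonneg this]
    have h2 : ‖(Complex.I * (ρ : ℂ)) ^ n / n.factorial‖ = |ρ| ^ n / n.factorial := by simp
    rw [h2]
    have := hC ρ
    gcongr
  have heq : ∀ n : ℕ, ∫ ρ in (-R)..R, φ ρ * ((Complex.I * (ρ : ℂ)) ^ n / n.factorial * (a n : ℂ)) =
      (1 / (n.factorial : ℂ)) * (∫ ρ in (-R)..R, φ ρ * (Complex.I * (ρ : ℂ)) ^ n) * (a n : ℂ) := by
    intro n
    rw [← intervalIntegral.integral_const_mul, ← intervalIntegral.integral_mul_const]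
    congr 1
    ext ρ
    ring
  constructor
  · have h := intervalIntegral.hasSum_integral_of_dominated_convergence (μ := volume)
      (a := -R) (b := R)
      (F := fun (n : ℕ) (ρ : ℝ) => φ ρ * ((Complex.I * (ρ : ℂ)) ^ n / n.factorial * (a n : ℂ)))
      (f := fun ρ => φ ρ * ∫ x : Fin N → ℝ, Complex.exp (-((q x : ℝ) : ℂ)) *
          Complex.exp (Complex.I * (ρ : ℂ) * ((g x : ℝ) : ℂ)))
      (fun n _ => C * (R ^ n / n.factorial * a n)) ?_ ?_ ?_ ?_ ?_
    · simp only [heq] at h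
      exact h.tsum_eq.symm
    · intro n
      exact (hφ.mul (Continuous.stronglyMeasurable (by fun_prop))).aestronglyMeasurable
    · exact fun n => Filter.Eventually.of_forall (hbd n)
    · exact Filter.Eventually.of_forall fun _ _ => hsum.mul_left C
    · exact intervalIntegrable_const
    · refine Filter.Eventually.of_forall fun ρ hρ => ?_
      rw [Set.uIoc_of_le hle] at hρ
      exact (hinner ρ (abs_le.mpr ⟨hρ.1.le, hρ.2⟩)).mul_left _
  · refine ((hsum.mul_left C).mul_right (|R - -R|)).of_nonneg_of_le (fun _ => norm_nonneg _) fun n => ?_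
    rw [← heq]
    exact intervalIntegral.norm_integral_le_of_norm_le_const (hbd n)

theorem stmt14 (N m : ℕ) (hN : 0 < N) (hm : 0 < m)
    (p : MvPolynomial (Fin N) ℝ) (hdeg : p.totalDegree = 2 * m)
    (M : ℝ) (hM : 0 ≤ M) (hPbound : ∀ x : Fin N → ℝ, -M ≤ MvPolynomial.eval x p)
    (K : Matrix (Fin N) (Fin N) ℝ) (hK : K.PosDef)
    (k : ℕ) (hk : 2 * m ≤ k) (hkeven : Even k) (R : ℝ) (hR : 0 < R) :
    (∫ ρ in (-R)..R, phiFT k ρ *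
        ∫ x : Fin N → ℝ, Complex.exp (-((x ⬝ᵥ K *ᵥ x : ℝ) : ℂ)) *
          Complex.exp (Complex.I * (ρ : ℂ) *
            (((MvPolynomial.eval x p + M) ^ ((1 : ℝ) / k) : ℝ) : ℂ))) =
      (∑' n : ℕ, (1 / (n.factorial : ℂ)) *
        (∫ ρ in (-R)..R, phiFT k ρ * (Complex.I * (ρ : ℂ)) ^ n) *
        ((∫ x : Fin N → ℝ,
          (MvPolynomial.eval x p + M) ^ ((n : ℝ) / k) *
            Real.exp (-(x ⬝ᵥ K *ᵥ x)) : ℝ) : ℂ)) ∧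
      Summable (fun n : ℕ => ‖(1 / (n.factorial : ℂ)) *
        (∫ ρ in (-R)..R, phiFT k ρ * (Complex.I * (ρ : ℂ)) ^ n) *
        ((∫ x : Fin N → ℝ,
          (MvPolynomial.eval x p + M) ^ ((n : ℝ) / k) *
            Real.exp (-(x ⬝ᵥ K *ᵥ x)) : ℝ) : ℂ)‖) := by
  obtain ⟨c, hc, hqc⟩ := aux_quad K hK
  obtain ⟨C, hC0, hC⟩ := aux_poly p
  obtain ⟨B, hB0, hB⟩ := aux_phi_bound k
  have hk0 : k ≠ 0 := by omega
  have hP0 : ∀ x, 0 ≤ MvPolynomial.eval x p + M := fun x => by linarith [hPbound x]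
  have hpc : Continuous (fun x : Fin N → ℝ => MvPolynomial.eval x p) :=
    MvPolynomial.continuous_eval p
  have hg : Continuous (fun x : Fin N → ℝ => (MvPolynomial.eval x p + M) ^ ((1 : ℝ) / k)) :=
    (hpc.add continuous_const).rpow_const fun x => Or.inr (by positivity)
  have hq : Continuous (fun x : Fin N → ℝ => x ⬝ᵥ K *ᵥ x) := by fun_prop
  have hg0 : ∀ x : Fin N → ℝ, 0 ≤ (MvPolynomial.eval x p + M) ^ ((1 : ℝ) / k) :=
    fun x => Real.rpow_nonneg (hP0 x) _
  have hgD : ∀ x : Fin N → ℝ, (MvPolynomial.eval x p + M) ^ ((1 : ℝ) / k) ≤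
      (C + M) ^ ((1 : ℝ) / k) * (1 + ‖x‖) := by
    intro x
    have h1 : (1 : ℝ) ≤ 1 + ‖x‖ := by linarith [norm_nonneg x]
    have h2 : MvPolynomial.eval x p + M ≤ (C + M) * (1 + ‖x‖) ^ k := by
      have h3 : (1 + ‖x‖) ^ p.totalDegree ≤ (1 + ‖x‖) ^ k :=
        pow_le_pow_right₀ h1 (by omega)
      have h4 : (1 : ℝ) ≤ (1 + ‖x‖) ^ k := one_le_pow₀ h1
      have h5 := hC x
      nlinarith [mul_le_mul_of_nonneg_left h3 hC0]
    calc _ ≤ ((C + M) * (1 + ‖x‖) ^ k) ^ ((1 : ℝ) / k) :=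
          Real.rpow_le_rpow (hP0 x) h2 (by positivity)
      _ = _ := by
          rw [Real.mul_rpow (by positivity) (by positivity), one_div,
            Real.pow_rpow_inv_natCast (by positivity) hk0]
  have hpow : ∀ (n : ℕ) (x : Fin N → ℝ), (MvPolynomial.eval x p + M) ^ ((n : ℝ) / k) =
      ((MvPolynomial.eval x p + M) ^ ((1 : ℝ) / k)) ^ n := by
    intro n x
    rw [← Real.rpow_mul_natCast (hP0 x)]
    congr 1
    ring
  simp only [hpow]
  exact aux_final _ _ hg hq hg0 R hR
    (aux_main _ _ hg hq hg0 _ c hc hgD hqc R hR) (phiFT k) (aux_phi_meas k) B hB0 hB
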